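/- For every n ≥ 1, every totally symmetric invariant tensor of rank 2n on sl(2,ℂ) is a scalar multiple of the fully symmetrized product of Kronecker deltas: if t : (Fin 2n → Fin 3) → ℂ is totally symmetric and invariant, then there exists λ ∈ ℂ such that t(ι) = λ · (1/(2n)!) · Σ_{σ ∈ Perm(Fin 2n)} Π_{j=0}^{n−1} δ(ι(σ(2j)), ι(σ(2j+1))) for all ι : Fin 2n → Fin 3. -/

import Mathlib

/-- The Levi-Civita symbol on three indices, totally antisymmetric with `ε(0,1,2) = 1`. -/
def lev (a b c : Fin 3) : ℂ :=
  if (a, b, c) = (0, 1, 2) ∨ (a, b, c) = (1, 2, 0) ∨ (a, b, c) = (2, 0, 1) then 1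
  else if (a, b, c) = (2, 1, 0) ∨ (a, b, c) = (1, 0, 2) ∨ (a, b, c) = (0, 2, 1) then -1
  else 0

/-- The Kronecker delta on `Fin 3`, valued in `ℂ`. -/
def kdelta (a b : Fin 3) : ℂ := if a = b then 1 else 0

/-- The structure constants `f(a,b,c) = i√2 ε(a,b,c)` of `sl(2,ℂ)` in an orthonormal basis
for the trace form. -/
noncomputable def fconst (a b c : Fin 3) : ℂ := Complex.I * (Real.sqrt 2 : ℂ) * lev a b c

/-- The fully symmetrized product of Kronecker deltas of rank `2n`:
`t⁰(ι) = (1/(2n)!) Σ_{σ ∈ Perm(Fin 2n)} Π_{j<n} δ(ι(σ(2j)), ι(σ(2j+1)))`. -/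
noncomputable def symdelta (n : ℕ) (ι : Fin (2 * n) → Fin 3) : ℂ :=
  (1 / ((2 * n).factorial : ℂ)) *
    ∑ σ : Equiv.Perm (Fin (2 * n)),
      ∏ j : Fin n,
        kdelta (ι (σ ⟨2 * j.1, by omega⟩)) (ι (σ ⟨2 * j.1 + 1, by omega⟩))

lemma sum_pairs (n : ℕ) (g : Fin (2 * n) → ℂ) :
    ∑ j, g j = ∑ k : Fin n, (g ⟨2 * k.1, by omega⟩ + g ⟨2 * k.1 + 1, by omega⟩) := by
  rw [← Equiv.sum_comp (finProdFinEquiv.trans (finCongr (Nat.mul_comm n 2))) g,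
    Fintype.sum_prod_type]
  refine Finset.sum_congr rfl fun k _ => ?_
  rw [Fin.sum_univ_two]
  congr 2 <;> ext <;> simp [finProdFinEquiv] <;> omega

lemma lev_swap (a b c : Fin 3) : lev a b c + lev a c b = 0 := by
  fin_cases a <;> fin_cases b <;> fin_cases c <;> simp [lev]

lemma prod_delta_inv (n : ℕ) (c : Fin 3) (ι : Fin (2 * n) → Fin 3) :
    ∑ j : Fin (2 * n), ∑ b : Fin 3, lev c (ι j) b *
      ∏ k : Fin n, kdelta (Function.update ι j b ⟨2 * k.1, by omega⟩)
        (Function.update ι j b ⟨2 * k.1 + 1, by omega⟩) = 0 := by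
  rw [sum_pairs]
  refine Finset.sum_eq_zero fun k _ => ?_
  set x := ι ⟨2 * k.1, by omega⟩ with hx
  set y := ι ⟨2 * k.1 + 1, by omega⟩ with hy
  have h0 : ∀ b : Fin 3, ∏ l : Fin n,
      kdelta (Function.update ι ⟨2 * k.1, by omega⟩ b ⟨2 * l.1, by omega⟩)
        (Function.update ι ⟨2 * k.1, by omega⟩ b ⟨2 * l.1 + 1, by omega⟩)
      = kdelta b y * ∏ l ∈ Finset.univ.erase k,
        kdelta (ι ⟨2 * l.1, by omega⟩) (ι ⟨2 * l.1 + 1, by omega⟩) := by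
    intro b
    rw [← Finset.mul_prod_erase _ _ (Finset.mem_univ k)]
    congr 1
    · rw [Function.update_self, Function.update_of_ne (by simp [Fin.ext_iff])]
    · refine Finset.prod_congr rfl fun l hl => ?_
      have hl' : l.1 ≠ k.1 := fun h => (Finset.mem_erase.1 hl).1 (Fin.ext h)
      rw [Function.update_of_ne (by simp only [ne_eq, Fin.ext_iff]; omega),
        Function.update_of_ne (by simp only [ne_eq, Fin.ext_iff]; omega)]
  have h1 : ∀ b : Fin 3, ∏ l : Fin n,
      kdelta (Function.update ι ⟨2 * k.1 + 1, by omega⟩ b ⟨2 * l.1, by omega⟩)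
        (Function.update ι ⟨2 * k.1 + 1, by omega⟩ b ⟨2 * l.1 + 1, by omega⟩)
      = kdelta x b * ∏ l ∈ Finset.univ.erase k,
        kdelta (ι ⟨2 * l.1, by omega⟩) (ι ⟨2 * l.1 + 1, by omega⟩) := by
    intro b
    rw [← Finset.mul_prod_erase _ _ (Finset.mem_univ k)]
    congr 1
    · rw [Function.update_self, Function.update_of_ne (by simp [Fin.ext_iff])]
    · refine Finset.prod_congr rfl fun l hl => ?_
      have hl' : l.1 ≠ k.1 := fun h => (Finset.mem_erase.1 hl).1 (Fin.ext h)
      rw [Function.update_of_ne (by simp only [ne_eq, Fin.ext_iff]; omega),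
        Function.update_of_ne (by simp only [ne_eq, Fin.ext_iff]; omega)]
  simp only [h0, h1, ← mul_assoc, ← Finset.sum_mul]
  rw [← add_mul]
  have : (∑ b, lev c x b * kdelta b y) + ∑ b, lev c y b * kdelta x b = 0 := by
    simp [kdelta, lev_swap]
  rw [this, zero_mul]

lemma symdelta_inv (n : ℕ) (c : Fin 3) (ι : Fin (2 * n) → Fin 3) :
    ∑ j : Fin (2 * n), ∑ b : Fin 3, lev c (ι j) b * symdelta n (Function.update ι j b) = 0 := by
  simp only [symdelta, mul_left_comm (lev _ _ _), ← Finset.mul_sum]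
  simp only [Finset.mul_sum (s := Finset.univ (α := Equiv.Perm (Fin (2 * n))))]
  refine mul_eq_zero_of_right _ ?_
  have : ∀ j : Fin (2 * n), ∑ b : Fin 3, ∑ σ : Equiv.Perm (Fin (2 * n)), lev c (ι j) b *
      ∏ k : Fin n, kdelta (Function.update ι j b (σ ⟨2 * k.1, by omega⟩))
        (Function.update ι j b (σ ⟨2 * k.1 + 1, by omega⟩)) =
      ∑ σ : Equiv.Perm (Fin (2 * n)), ∑ b : Fin 3, lev c (ι j) b *
      ∏ k : Fin n, kdelta (Function.update ι j b (σ ⟨2 * k.1, by omega⟩))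
        (Function.update ι j b (σ ⟨2 * k.1 + 1, by omega⟩)) := fun j => Finset.sum_comm
  simp only [this]
  rw [Finset.sum_comm]
  refine Finset.sum_eq_zero fun σ _ => ?_
  rw [← Equiv.sum_comp σ, ← prod_delta_inv n c (ι ∘ σ)]
  refine Finset.sum_congr rfl fun j _ => Finset.sum_congr rfl fun b _ => ?_
  have : ∀ i, Function.update ι (σ j) b (σ i) = Function.update (ι ∘ σ) j b i := by
    intro i
    simp [Function.update_apply]
  simp only [this, Function.comp_apply]

lemma symdelta_symm (n : ℕ) (τ : Equiv.Perm (Fin (2 * n))) (ι : Fin (2 * n) → Fin 3) :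
    symdelta n (ι ∘ τ) = symdelta n ι := by
  unfold symdelta
  congr 1
  exact Fintype.sum_equiv (Equiv.mulLeft τ) _ _ (fun σ => by simp)

lemma symdelta_zero (n : ℕ) : symdelta n (fun _ => 0) = 1 := by
  have : ((2 * n).factorial : ℂ) ≠ 0 := by exact_mod_cast Nat.factorial_ne_zero _
  simp [symdelta, kdelta, Fintype.card_perm, this]

/-- If the relation moving a `0` to `v` holds, one can lower the number of nonzero entries. -/
lemma step (m : ℕ) (t : (Fin m → Fin 3) → ℂ)
    (hsym : ∀ (σ : Equiv.Perm (Fin m)) (ι : Fin m → Fin 3), t (ι ∘ σ) = t ι)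
    (c v : Fin 3) (s : ℂ) (hs : s ≠ 0) (hv : v ≠ 0)
    (h0 : ∀ b, lev c 0 b = if b = v then s else 0)
    (h1 : ∀ a b, a ≠ 0 → b ≠ 0 → lev c a b = 0)
    (ι : Fin m → Fin 3)
    (ih : ∀ ι' : Fin m → Fin 3, (Finset.univ.filter fun j => ι' j ≠ 0).card <
      (Finset.univ.filter fun j => ι j ≠ 0).card → t ι' = 0)
    (j0 : Fin m) (hj0 : ι j0 = v)
    (hinv : ∀ ι : Fin m → Fin 3,
      ∑ j : Fin m, ∑ b : Fin 3, lev c (ι j) b * t (Function.update ι j b) = 0) :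
    t ι = 0 := by
  have key := hinv (Function.update ι j0 0)
  set κ := Function.update ι j0 0 with hκ
  have hκ0 : κ j0 = 0 := by simp [hκ]
  have hι : ι = Function.update κ j0 v := by simp [hκ, ← hj0]
  have hterm : ∀ j, ∑ b : Fin 3, lev c (κ j) b * t (Function.update κ j b)
      = if κ j = 0 then s * t ι else 0 := by
    intro j
    split_ifs with hj
    · have : t (Function.update κ j v) = t ι := by
        rw [hι, ← hsym (Equiv.swap j j0) (Function.update κ j0 v)]
        congr 1
        funext i
        simp only [Function.comp_apply, Function.update_apply, Equiv.swap_apply_def]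
        clear_value κ
        clear hι hκ key ih hinv h0 h1
        grind
      simp [hj, h0, this]
    · refine Finset.sum_eq_zero fun b _ => ?_
      by_cases hb : b = 0
      · subst hb
        rw [ih, mul_zero]
        refine Finset.card_lt_card (Finset.ssubset_iff_of_subset ?_ |>.2 ⟨j0, ?_, ?_⟩)
        · intro i
          simp only [Finset.mem_filter, Finset.mem_univ, true_and, hκ, Function.update_apply]
          split_ifs <;> simp
        · simp [hj0, hv]
        · simp [Function.update_apply, hκ0]
      · rw [h1 _ _ hj hb, zero_mul]
  simp only [hterm] at key
  rw [← Finset.sum_filter, Finset.sum_const, nsmul_eq_mul] at key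
  have hc : ((Finset.univ.filter fun j => κ j = 0).card : ℂ) ≠ 0 := by
    have : (Finset.univ.filter fun j => κ j = 0).card ≠ 0 :=
      Finset.card_ne_zero_of_mem (a := j0) (by simp [hκ0])
    exact_mod_cast this
  simpa [hc, hs] using key

lemma uniq (m : ℕ) (t : (Fin m → Fin 3) → ℂ)
    (hsym : ∀ (σ : Equiv.Perm (Fin m)) (ι : Fin m → Fin 3), t (ι ∘ σ) = t ι)
    (hinv : ∀ (c : Fin 3) (ι : Fin m → Fin 3),
      ∑ j : Fin m, ∑ b : Fin 3, lev c (ι j) b * t (Function.update ι j b) = 0)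
    (hz : t (fun _ => 0) = 0) (N : ℕ) : ∀ ι : Fin m → Fin 3,
      (Finset.univ.filter fun j => ι j ≠ 0).card = N → t ι = 0 := by
  induction N using Nat.strong_induction_on with
  | _ N ih =>
    intro ι hN
    have ih' : ∀ ι' : Fin m → Fin 3, (Finset.univ.filter fun j => ι' j ≠ 0).card <
        (Finset.univ.filter fun j => ι j ≠ 0).card → t ι' = 0 :=
      fun ι' h => ih _ (hN ▸ h) ι' rfl
    by_cases hall : ∀ j, ι j = 0
    · rw [funext hall]; exact hz
    · push Not at hall
      obtain ⟨j0, hj0⟩ := hall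
      have h12 : ι j0 = 1 ∨ ι j0 = 2 := by
        generalize ι j0 = a at hj0
        revert a; decide
      rcases h12 with h | h
      · refine step m t hsym 2 1 1 one_ne_zero (by decide) ?_ ?_ ι ih' j0 h (hinv 2)
        · intro b; fin_cases b <;> simp [lev]
        · intro a b; fin_cases a <;> fin_cases b <;> simp [lev]
      · refine step m t hsym 1 2 (-1) (by simp) (by decide) ?_ ?_ ι ih' j0 h (hinv 1)
        · intro b; fin_cases b <;> simp [lev]
        · intro a b; fin_cases a <;> fin_cases b <;> simp [lev]

/-- For `n ≥ 1`, every totally symmetric invariant tensor of rank `2n` on `sl(2,ℂ)` is a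
scalar multiple of the fully symmetrized product of Kronecker deltas. -/
theorem stmt_10 (n : ℕ) (hn : 1 ≤ n) (t : (Fin (2 * n) → Fin 3) → ℂ)
    (hsym : ∀ (σ : Equiv.Perm (Fin (2 * n))) (ι : Fin (2 * n) → Fin 3), t (ι ∘ σ) = t ι)
    (hinv : ∀ (c : Fin 3) (ι : Fin (2 * n) → Fin 3),
      ∑ j : Fin (2 * n), ∑ b : Fin 3, fconst c (ι j) b * t (Function.update ι j b) = 0) :
    ∃ lam : ℂ, ∀ ι : Fin (2 * n) → Fin 3, t ι = lam * symdelta n ι := by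
  have hinv' : ∀ (c : Fin 3) (ι : Fin (2 * n) → Fin 3),
      ∑ j : Fin (2 * n), ∑ b : Fin 3, lev c (ι j) b * t (Function.update ι j b) = 0 := by
    intro c ι
    have h := hinv c ι
    simp only [fconst, mul_assoc (Complex.I * (Real.sqrt 2 : ℂ)), ← Finset.mul_sum] at h
    have hne : Complex.I * (Real.sqrt 2 : ℂ) ≠ 0 := by simp
    exact (mul_eq_zero.1 h).resolve_left hne
  refine ⟨t (fun _ => 0), fun ι => sub_eq_zero.1 ?_⟩
  refine uniq (2 * n) (fun ι => t ι - t (fun _ => 0) * symdelta n ι) ?_ ?_ ?_ _ ι rfl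
  · intro σ ι
    simp only [hsym, symdelta_symm]
  · intro c ι
    simp only [mul_sub, Finset.sum_sub_distrib, hinv', mul_left_comm (lev _ _ _),
      ← Finset.mul_sum, symdelta_inv, mul_zero, sub_zero]
  · simp [symdelta_zero]
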